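/- Let R be an atomic domain with only finitely many atoms. Then R has only finitely many prime ideals, R is Noetherian, and every nonzero prime ideal of R is maximal. -/

import Mathlib

/-! A prime ideal that contains a product contains one of its factors. So if the elements of `S`
and the units together generate the multiplicative monoid of `R`, every prime ideal is spanned by
the elements of `S` that it contains. For finite `S` this leaves finitely many prime ideals, all
finitely generated, and `R` is Noetherian by Cohen's theorem. Prime avoidance then yields, for each
prime `P`, an element of `P` lying in no prime strictly below `P`, so `P` has height at most one by
Krull's principal ideal theorem. -/

section Associates

variable {M : Type*}

lemma exists_finite_closure_image_associates_mk_eq_top [CommMonoid M] [Monoid.FG (Associates M)] :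
    ∃ S : Set M, S.Finite ∧ Submonoid.closure (Associates.mk '' S) = ⊤ := by
  obtain ⟨T, hT, hfin⟩ := Monoid.fg_iff.mp ‹Monoid.FG (Associates M)›
  exact ⟨Quotient.out '' T, hfin.image _, by simpa [Set.image_image] using hT⟩

lemma exists_mem_closure_associated [CommMonoid M] {S : Set M}
    (hS : Submonoid.closure (Associates.mk '' S) = ⊤) (x : M) :
    ∃ y ∈ Submonoid.closure S, Associated y x := by
  have hx : Associates.mk x ∈ (Submonoid.closure S).map Associates.mkMonoidHom := by
    rw [MonoidHom.map_mclosure]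
    exact hS ▸ Submonoid.mem_top _
  obtain ⟨y, hy, hyx⟩ := hx
  exact ⟨y, hy, Associates.mk_eq_mk_iff_associated.mp hyx⟩

lemma associates_fg_of_finite_irreducible [CommMonoidWithZero M]
    (hatomic : ∀ x : M, x ≠ 0 → ¬ IsUnit x →
      ∃ s : Multiset M, (∀ f ∈ s, Irreducible f) ∧ s.prod = x)
    (hfin : {a : Associates M | Irreducible a}.Finite) : Monoid.FG (Associates M) := by
  refine Monoid.fg_iff.mpr ⟨insert 0 {a | Irreducible a}, ?_, hfin.insert 0⟩
  refine (Submonoid.eq_top_iff' _).mpr (Associates.forall_associated.mpr fun x ↦ ?_)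
  by_cases hx : x = 0
  · exact Submonoid.subset_closure (by simp [hx])
  by_cases hu : IsUnit x
  · rw [Associates.mk_eq_one.mpr hu]
    exact one_mem _
  obtain ⟨s, hs, rfl⟩ := hatomic x hx hu
  rw [← Associates.prod_mk]
  refine Submonoid.multiset_prod_mem _ _ fun a ha ↦ ?_
  obtain ⟨f, hf, rfl⟩ := Multiset.mem_map.mp ha
  exact Submonoid.subset_closure (.inr (Associates.irreducible_mk.mpr (hs f hf)))

lemma finite_irreducible_associates {R : Type*} [CommRing R] [IsDomain R]
    (hfin : {J : Ideal R | ∃ f : R, Irreducible f ∧ J = Ideal.span {f}}.Finite) :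
    {a : Associates R | Irreducible a}.Finite := by
  refine Set.Finite.of_injOn (f := fun a ↦ (Ideal.associatesEquivIsPrincipal R a : Ideal R))
    ?_ (Subtype.val_injective.comp (Equiv.injective _)).injOn hfin
  refine Associates.forall_associated.mpr fun f hf ↦ ?_
  exact ⟨f, Associates.irreducible_mk.mp hf, Ideal.associatesEquivIsPrincipal_apply f⟩

end Associates


section CommSemiring

variable {R : Type*} [CommSemiring R]

lemma span_inter_eq_of_isPrime {S : Set R} (hS : Submonoid.closure (Associates.mk '' S) = ⊤)
    (P : Ideal R) [hP : P.IsPrime] : Ideal.span (S ∩ P) = P := by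
  refine le_antisymm (Ideal.span_le.mpr Set.inter_subset_right) fun x hx ↦ ?_
  obtain ⟨y, hy, hyx⟩ := exists_mem_closure_associated hS x
  obtain ⟨s, hs, rfl⟩ := Submonoid.exists_multiset_of_mem_closure hy
  obtain ⟨f, hfs, hfP⟩ :=
    (hP.multiset_prod_mem_iff_exists_mem s).mp (P.mem_of_dvd hyx.dvd' hx)
  exact Ideal.mem_of_dvd _ ((Multiset.dvd_prod hfs).trans hyx.dvd)
    (Ideal.subset_span ⟨hs f hfs, hfP⟩)

variable (R) in
lemma finite_setOf_isPrime_of_associates_fg [Monoid.FG (Associates R)] :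
    {P : Ideal R | P.IsPrime}.Finite := by
  obtain ⟨S, hfin, hS⟩ := exists_finite_closure_image_associates_mk_eq_top (M := R)
  refine (hfin.finite_subsets.image Ideal.span).subset fun P (_ : P.IsPrime) ↦ ?_
  exact ⟨S ∩ P, Set.inter_subset_left, span_inter_eq_of_isPrime hS P⟩

end CommSemiring

section CommRing

variable {R : Type*} [CommRing R]

variable (R) in
lemma isNoetherianRing_of_associates_fg [Monoid.FG (Associates R)] : IsNoetherianRing R := by
  obtain ⟨S, hfin, hS⟩ := exists_finite_closure_image_associates_mk_eq_top (M := R)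
  refine IsNoetherianRing.of_prime fun P _ ↦ ?_
  rw [← span_inter_eq_of_isPrime hS P]
  exact Submodule.fg_span (hfin.inter_of_left _)

lemma exists_mem_minimalPrimes_span_singleton {P : Ideal R} [hP : P.IsPrime]
    (hfin : {Q : Ideal R | Q.IsPrime ∧ Q < P}.Finite) :
    ∃ x, P ∈ (Ideal.span {x}).minimalPrimes := by
  have not_covered : ¬ (P : Set R) ⊆ ⋃ Q ∈ {Q : Ideal R | Q.IsPrime ∧ Q < P}, (Q : Set R) := by
    intro hcover
    obtain ⟨Q, ⟨-, hQP⟩, hPQ⟩ :=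
      (Ideal.subset_union_prime_finite hfin (f := id) ⊥ ⊥ fun Q hQ _ _ ↦ hQ.1).mp hcover
    exact hQP.not_ge hPQ
  obtain ⟨x, hxP, hx⟩ := Set.not_subset.mp not_covered
  refine ⟨x, ⟨hP, (Ideal.span_singleton_le_iff_mem P).mpr hxP⟩, fun Q ⟨hQ, hxQ⟩ hQP ↦ ?_⟩
  by_contra hPQ
  exact hx (Set.mem_biUnion ⟨hQ, lt_of_le_not_ge hQP hPQ⟩
    ((Ideal.span_singleton_le_iff_mem Q).mp hxQ))

lemma height_le_one_of_finite_isPrime_lt [IsNoetherianRing R] {P : Ideal R} [P.IsPrime]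
    (hfin : {Q : Ideal R | Q.IsPrime ∧ Q < P}.Finite) : P.height ≤ 1 := by
  obtain ⟨x, hx⟩ := exists_mem_minimalPrimes_span_singleton hfin
  exact Ideal.height_le_one_of_isPrincipal_of_mem_minimalPrimes _ P hx

lemma krullDimLE_one_of_finite_setOf_isPrime [IsNoetherianRing R]
    (hfin : {P : Ideal R | P.IsPrime}.Finite) : Ring.KrullDimLE 1 R := by
  rw [Ring.krullDimLE_iff, ringKrullDim_le_iff_height_le]
  intro P _
  exact_mod_cast height_le_one_of_finite_isPrime_lt (hfin.subset fun Q hQ ↦ hQ.1)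

end CommRing

theorem stmt_18_general (R : Type*) [CommRing R] [Monoid.FG (Associates R)] :
    {P : Ideal R | P.IsPrime}.Finite ∧ IsNoetherianRing R ∧ Ring.KrullDimLE 1 R := by
  have hprimes := finite_setOf_isPrime_of_associates_fg R
  have hnoeth := isNoetherianRing_of_associates_fg R
  exact ⟨hprimes, hnoeth, krullDimLE_one_of_finite_setOf_isPrime hprimes⟩

theorem stmt_18 (R : Type*) [CommRing R] [IsDomain R]
    (hatomic : ∀ x : R, x ≠ 0 → ¬ IsUnit x →
      ∃ s : Multiset R, (∀ f ∈ s, Irreducible f) ∧ s.prod = x)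
    (hfin : {J : Ideal R | ∃ f : R, Irreducible f ∧ J = Ideal.span {f}}.Finite) :
    {P : Ideal R | P.IsPrime}.Finite ∧ IsNoetherianRing R ∧
      ∀ P : Ideal R, P.IsPrime → P ≠ ⊥ → P.IsMaximal := by
  have := associates_fg_of_finite_irreducible hatomic (finite_irreducible_associates hfin)
  obtain ⟨hprimes, hnoeth, hdim⟩ := stmt_18_general R
  exact ⟨hprimes, hnoeth, fun P hP hP0 ↦ hP.isMaximal_of_ne_bot hP0⟩
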